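/- For every integer j with 0 ≤ j < m, one has r_j = r'_{m−1−j}; that is, the sequence of m vectors α, s_α(β), s_α s_β(α), … is the reverse of the sequence β, s_β(α), s_β s_α(β), …. Consequently the product of the members of the first sequence equals the product of the members of the second (as elements of the polynomial ring on the plane). -/

import Mathlib

/-!
Write `e(t)` for the unit vector at angle `t`, modulo `2π`; the reflection fixing `e(a)^⊥` sends
`e(t)` to `e(2a + π - t)`. If `α = e(a)`, `β = e(b)` and `θ = a + π - b`, an induction that
exchanges the two roots gives `r_j = e(a + jθ)` and, since `b + π - a = -θ` modulo `2π`,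
`r'_j = e(b - jθ)`: the two sequences walk along the unit circle with the same step in opposite
directions. They are reverses of each other because the first one ends at
`a + (m - 1)θ = b + mθ - π`, which is `b` when `mθ = π`. The inner product `-cos(π/m)` determines
`θ` only up to sign, but `mθ = π` and `m(-θ) = π` are equivalent modulo `2π`.
-/

noncomputable section

open scoped RealInnerProductSpace

/-- Alternating product `x·y·x·⋯` with `m` factors, starting with `x`. -/
def altProd {M : Type*} [Monoid M] (x y : M) : ℕ → M
  | 0 => 1
  | (j + 1) => x * altProd y x j

/-- The Euclidean plane. -/
abbrev E2 := EuclideanSpace ℝ (Fin 2)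

/-- Orthogonal reflection of the plane fixing the hyperplane `α^⊥`. -/
def refl2 (α : E2) : E2 ≃ₗᵢ[ℝ] E2 := Submodule.reflection (ℝ ∙ α)ᗮ

/-- The root sequence `r_0 = α, r_1 = s_α(β), r_2 = s_α s_β(α), …`. -/
def rootSeq (α β : E2) (j : ℕ) : E2 :=
  altProd (refl2 α) (refl2 β) j (if Even j then α else β)

/-- A vector of the plane, viewed as a degree-one element of the polynomial ring on the
plane. -/
def toPoly (v : E2) : MvPolynomial (Fin 2) ℝ :=
  ∑ i, v i • MvPolynomial.X i

/-- The unit vector of the plane at angle `θ` from the first coordinate axis. Angles are elements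
of `Real.Angle`, i.e. real numbers modulo `2π`. -/
def unitVec (θ : Real.Angle) : E2 := !₂[θ.cos, θ.sin]

lemma inner_unitVec (a b : Real.Angle) : ⟪unitVec a, unitVec b⟫ = (b - a).cos := by
  simp [unitVec, PiLp.inner_apply, Fin.sum_univ_two, sub_eq_add_neg, Real.Angle.cos_add]

lemma norm_unitVec (θ : Real.Angle) : ‖unitVec θ‖ = 1 := by
  simp [unitVec, EuclideanSpace.norm_eq, Real.Angle.cos_sq_add_sin_sq]

lemma exists_unitVec_eq {v : E2} (hv : ‖v‖ = 1) : ∃ θ, unitVec θ = v := by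
  let z : ℂ := ⟨v 0, v 1⟩
  have norm_z : ‖z‖ = 1 := by
    rw [← hv, Complex.norm_eq_sqrt_sq_add_sq, EuclideanSpace.norm_eq]
    simp [z]
  have cos_arg_z : Real.cos z.arg = v 0 := by
    rw [← one_mul (Real.cos _), ← norm_z, Complex.norm_mul_cos_arg]
  have sin_arg_z : Real.sin z.arg = v 1 := by
    rw [← one_mul (Real.sin _), ← norm_z, Complex.norm_mul_sin_arg]
  refine ⟨z.arg, ?_⟩
  ext i
  fin_cases i
  · simpa [unitVec] using cos_arg_z
  · simpa [unitVec] using sin_arg_z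

lemma refl2_apply_of_norm_eq_one {α : E2} (hα : ‖α‖ = 1) (v : E2) :
    refl2 α v = v - (2 * ⟪α, v⟫) • α := by
  rw [refl2, Submodule.reflection_orthogonal_apply, Submodule.reflection_singleton_apply, hα]
  simp [mul_smul, two_smul]

lemma refl2_unitVec (a b : Real.Angle) :
    refl2 (unitVec a) (unitVec b) = unitVec (2 • a + Real.pi - b) := by
  obtain ⟨d, rfl⟩ : ∃ d, b = a + d := ⟨b - a, by abel⟩
  have h_angle : 2 • a + Real.pi - (a + d) = a + -d + Real.pi := by abel
  rw [refl2_apply_of_norm_eq_one (norm_unitVec a), inner_unitVec, add_sub_cancel_left, h_angle]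
  ext i
  fin_cases i <;> simp [unitVec, Real.Angle.cos_add, Real.Angle.sin_add] <;> ring

lemma rootSeq_succ (α β : E2) (j : ℕ) : rootSeq α β (j + 1) = refl2 α (rootSeq β α j) := by
  by_cases hj : Even j <;> simp [rootSeq, altProd, Nat.even_add_one, hj]

lemma rootSeq_unitVec (a b : Real.Angle) (j : ℕ) :
    rootSeq (unitVec a) (unitVec b) j = unitVec (a + j • (a + Real.pi - b)) := by
  induction j generalizing a b with
  | zero => simp [rootSeq, altProd]
  | succ j ih =>
    rw [rootSeq_succ, ih, refl2_unitVec]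
    congr 1
    linear_combination (norm := module) -(j • Real.Angle.two_nsmul_coe_pi)

lemma rootSeq_unitVec_reverse {a b : Real.Angle} {m j : ℕ} (h : m • (a + Real.pi - b) = Real.pi)
    (hj : j < m) :
    rootSeq (unitVec a) (unitVec b) j = rootSeq (unitVec b) (unitVec a) (m - 1 - j) := by
  obtain ⟨k, rfl⟩ : ∃ k, m = j + k + 1 := ⟨m - 1 - j, by omega⟩
  have h_index : j + k + 1 - 1 - j = k := by omega
  rw [rootSeq_unitVec, rootSeq_unitVec, h_index]
  congr 1
  linear_combination (norm := module) h - k • Real.Angle.two_nsmul_coe_pi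

lemma add_pi_sub_eq_or_eq_neg_of_inner_unitVec {a b θ : Real.Angle}
    (h : ⟪unitVec a, unitVec b⟫ = -θ.cos) :
    a + Real.pi - b = θ ∨ a + Real.pi - b = -θ := by
  rw [← Real.Angle.cos_eq_iff_eq_or_eq_neg, ← neg_inj, ← h, inner_unitVec, add_sub_right_comm,
    Real.Angle.cos_add_pi, neg_neg, ← Real.Angle.cos_neg, neg_sub]

theorem rootSeq_reverse_general {M : Type*} [CommMonoid M] (f : E2 → M) {m : ℕ} {α β : E2}
    {θ : Real.Angle} (hα : ‖α‖ = 1) (hβ : ‖β‖ = 1) (hαβ : ⟪α, β⟫ = -θ.cos)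
    (hθ : m • θ = Real.pi) :
    (∀ j < m, rootSeq α β j = rootSeq β α (m - 1 - j)) ∧
    ∏ j ∈ Finset.range m, f (rootSeq α β j) = ∏ j ∈ Finset.range m, f (rootSeq β α j) := by
  obtain ⟨a, rfl⟩ := exists_unitVec_eq hα
  obtain ⟨b, rfl⟩ := exists_unitVec_eq hβ
  have h_step : m • (a + Real.pi - b) = Real.pi := by
    rcases add_pi_sub_eq_or_eq_neg_of_inner_unitVec hαβ with h | h
    · rw [h, hθ]
    · rw [h, smul_neg, hθ, Real.Angle.neg_coe_pi]
  have h_reverse : ∀ j < m, rootSeq (unitVec a) (unitVec b) j =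
      rootSeq (unitVec b) (unitVec a) (m - 1 - j) :=
    fun j hj => rootSeq_unitVec_reverse h_step hj
  refine ⟨h_reverse, ?_⟩
  calc ∏ j ∈ Finset.range m, f (rootSeq (unitVec a) (unitVec b) j)
    _ = ∏ j ∈ Finset.range m, f (rootSeq (unitVec b) (unitVec a) (m - 1 - j)) :=
      Finset.prod_congr rfl fun j hj => congrArg f (h_reverse j (Finset.mem_range.mp hj))
    _ = ∏ j ∈ Finset.range m, f (rootSeq (unitVec b) (unitVec a) j) :=
      Finset.prod_range_reflect (fun j => f (rootSeq (unitVec b) (unitVec a) j)) m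

/-- If `α, β` are unit vectors with `⟪α, β⟫ = −cos(π/m)`, then
`r_j = r'_{m−1−j}` for `0 ≤ j < m` (the two root sequences are reverses of one another);
consequently the products of their members agree in the polynomial ring on the plane. -/
theorem rootSeq_reverse (m : ℕ) (hm : 2 ≤ m) (α β : E2)
    (hα : ‖α‖ = 1) (hβ : ‖β‖ = 1)
    (hαβ : ⟪α, β⟫ = -Real.cos (Real.pi / m)) :
    (∀ j < m, rootSeq α β j = rootSeq β α (m - 1 - j)) ∧
    ∏ j ∈ Finset.range m, toPoly (rootSeq α β j) =
      ∏ j ∈ Finset.range m, toPoly (rootSeq β α j) := by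
  have hθ : m • ((Real.pi / m : ℝ) : Real.Angle) = Real.pi := by
    rw [← Real.Angle.coe_nsmul, nsmul_eq_mul, mul_div_cancel₀ _ (by positivity)]
  exact rootSeq_reverse_general toPoly hα hβ (by rwa [Real.Angle.cos_coe]) hθ
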